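/- arXiv:0910.3118 — 3 statements merged into one kernel-verified Lean document; each statement's English description precedes it below -/
import Mathlib

section
/- Let l ≥ 1 and let h[l] denote the Cheeger constant of the neighborhood graph Γ[l], and assume 2·h[l] ≤ 1. If l is even, then λ_1 ≤ 1 − (1 − 2h[l])^{1/l} or λ_{N−1} ≥ 1 + (1 − 2h[l])^{1/l}. If l is odd, then λ_1 ≤ 1 − (1 − 2h[l])^{1/l}. -/
open Finset

noncomputable section

namespace BJ

variable {V : Type*} [Fintype V] [DecidableEq V]

/-- The degree `d_i = ∑_j w_ij` of a vertex. -/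
def deg (w : V → V → ℝ) (i : V) : ℝ := ∑ j, w i j

/-- The volume `vol(A) = ∑_{i ∈ A} d_i` of a vertex subset. -/
def vol (w : V → V → ℝ) (A : Finset V) : ℝ := ∑ i ∈ A, deg w i

/-- The total edge weight `|E(A,B)| = ∑_{i ∈ A, j ∈ B} w_ij` between two vertex subsets. -/
def eW (w : V → V → ℝ) (A B : Finset V) : ℝ := ∑ i ∈ A, ∑ j ∈ B, w i j

/-- The normalized graph Laplacian `(Δu)(i) = u(i) - (1/d_i) ∑_j w_ij u(j)`. -/
def lap (w : V → V → ℝ) (u : V → ℝ) (i : V) : ℝ :=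
  u i - (1 / deg w i) * ∑ j, w i j * u j

/-- `lam` is an eigenvalue of the normalized graph Laplacian. -/
def IsEigen (w : V → V → ℝ) (lam : ℝ) : Prop :=
  ∃ u : V → ℝ, u ≠ 0 ∧ ∀ i, lap w u i = lam * u i

/-- The weighted graph is connected: any two vertices are joined by a chain of
positive-weight edges. -/
def Conn (w : V → V → ℝ) : Prop :=
  ∀ i j : V, Relation.ReflTransGen (fun a b => 0 < w a b) i j

/-- The weighted graph is bipartite: the vertex set splits into two nonempty classes with
no edges inside a class. -/
def Bipartite (w : V → V → ℝ) : Prop :=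
  ∃ A : Finset V, A.Nonempty ∧ Aᶜ.Nonempty ∧
    (∀ i ∈ A, ∀ j ∈ A, w i j = 0) ∧ (∀ i ∈ Aᶜ, ∀ j ∈ Aᶜ, w i j = 0)

/-- The Cheeger constant
`h = min { |E(U,Uᶜ)| / vol(U) : ∅ ≠ U ⊊ V, vol(U) ≤ vol(V)/2 }`. -/
def cheeger (w : V → V → ℝ) : ℝ :=
  sInf { r : ℝ | ∃ U : Finset V, U.Nonempty ∧ U ≠ Finset.univ ∧
    vol w U ≤ vol w Finset.univ / 2 ∧ r = eW w U Uᶜ / vol w U }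

/-- The dual Cheeger constant
`h̄ = max { 2|E(V₁,V₂)| / (vol(V₁)+vol(V₂)) }` over pairs of disjoint nonempty vertex sets
`V₁, V₂` (the third class `V₃` of the partition being the complement of `V₁ ∪ V₂`). -/
def dualCheeger (w : V → V → ℝ) : ℝ :=
  sSup { r : ℝ | ∃ V1 V2 : Finset V, V1.Nonempty ∧ V2.Nonempty ∧ Disjoint V1 V2 ∧
    r = 2 * eW w V1 V2 / (vol w V1 + vol w V2) }

/-- The weights of the neighborhood graph `Γ[l]`:
`w_ij[l] = ∑_{k₁,…,k_{l-1}} w_{i k₁} w_{k₁ k₂} ⋯ w_{k_{l-1} j} / (d_{k₁} ⋯ d_{k_{l-1}})`,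
defined recursively (as a matrix, `wl w l = D ⬝ P^l`; in particular `wl w 1 = w`). -/
def wl (w : V → V → ℝ) : ℕ → V → V → ℝ
  | 0 => fun i j => if i = j then deg w i else 0
  | n + 1 => fun i j => ∑ k, wl w n i k * w k j / deg w k

theorem deg_wl (w : V → V → ℝ) (hdeg : ∀ i, 0 < deg w i) (n : ℕ) (i : V) :
    deg (wl w n) i = deg w i := by
  induction n with
  | zero => simp [deg, wl]
  | succ n ih =>
    rw [← ih]
    unfold deg
    simp only [wl]
    rw [Finset.sum_comm]
    refine Finset.sum_congr rfl fun k _ => ?_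
    have hk := (hdeg k).ne'
    rw [← Finset.sum_div, ← Finset.mul_sum]
    change wl w n i k * deg w k / deg w k = _
    field_simp

theorem wl_nonneg (w : V → V → ℝ) (hnn : ∀ i j, 0 ≤ w i j)
    (hdeg : ∀ i, 0 < deg w i) (n : ℕ) (i j : V) : 0 ≤ wl w n i j := by
  induction n generalizing j with
  | zero =>
    simp only [wl]
    split_ifs
    · exact (hdeg i).le
    · exact le_rfl
  | succ n ih =>
    simp only [wl]
    exact Finset.sum_nonneg fun k _ => div_nonneg (mul_nonneg (ih k) (hnn k j)) (hdeg k).le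

/-- The symmetric normalized adjacency matrix. -/
def nA (w : V → V → ℝ) : Matrix V V ℝ :=
  Matrix.of fun i j => w i j / (Real.sqrt (deg w i) * Real.sqrt (deg w j))

theorem nA_herm (w : V → V → ℝ) (hsym : ∀ i j, w i j = w j i) : (nA w).IsHermitian := by
  ext i j
  simp [nA, Matrix.conjTranspose_apply, hsym i j, mul_comm]

theorem wl_eq (w : V → V → ℝ) (hdeg : ∀ i, 0 < deg w i) (n : ℕ) (i j : V) :
    wl w n i j = Real.sqrt (deg w i) * Real.sqrt (deg w j) * (nA w ^ n) i j := by
  induction n generalizing j with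
  | zero =>
    simp only [wl, pow_zero, Matrix.one_apply]
    split_ifs with h
    · subst h
      rw [Real.mul_self_sqrt (hdeg i).le, mul_one]
    · simp
  | succ n ih =>
    simp only [wl, pow_succ, Matrix.mul_apply, Finset.mul_sum]
    refine Finset.sum_congr rfl fun k _ => ?_
    rw [ih k]
    have hk : Real.sqrt (deg w k) ≠ 0 := (Real.sqrt_pos.2 (hdeg k)).ne'
    have hj : Real.sqrt (deg w j) ≠ 0 := (Real.sqrt_pos.2 (hdeg j)).ne'
    have h2 : deg w k = Real.sqrt (deg w k) * Real.sqrt (deg w k) :=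
      (Real.mul_self_sqrt (hdeg k).le).symm
    simp only [nA, Matrix.of_apply]
    generalize Real.sqrt (deg w k) = a at *
    rw [h2]
    field_simp

theorem wl_symm (w : V → V → ℝ) (hsym : ∀ i j, w i j = w j i) (hdeg : ∀ i, 0 < deg w i)
    (n : ℕ) (i j : V) : wl w n i j = wl w n j i := by
  rw [wl_eq w hdeg, wl_eq w hdeg]
  have h := ((nA_herm w hsym).pow n).apply i j
  simp only [star_trivial] at h
  rw [h]; ring

theorem harmonic_const (w : V → V → ℝ)
    (hsym : ∀ i j, w i j = w j i) (hnn : ∀ i j, 0 ≤ w i j) (hconn : Conn w)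
    (u : V → ℝ) (hu : ∀ i, ∑ j, w i j * u j = deg w i * u i) (i j : V) : u i = u j := by
  have h0 : ∑ i, ∑ j, w i j * (u i - u j) ^ 2 = 0 := by
    have e1 : ∑ i, ∑ j, w i j * (u i) ^ 2 = ∑ i, deg w i * u i ^ 2 := by
      refine Finset.sum_congr rfl fun i _ => ?_
      rw [← Finset.sum_mul]; rfl
    have e2 : ∑ i, ∑ j, w i j * (u j) ^ 2 = ∑ i, deg w i * u i ^ 2 := by
      rw [Finset.sum_comm, ← e1]
      refine Finset.sum_congr rfl fun i _ => Finset.sum_congr rfl fun j _ => ?_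
      rw [hsym]
    have e3 : ∑ i, ∑ j, u i * (w i j * u j) = ∑ i, deg w i * u i ^ 2 := by
      refine Finset.sum_congr rfl fun i _ => ?_
      rw [← Finset.mul_sum, hu]; ring
    have : ∀ i j, w i j * (u i - u j) ^ 2
        = w i j * (u i) ^ 2 + w i j * (u j) ^ 2 - 2 * (u i * (w i j * u j)) := by
      intros; ring
    simp only [this, Finset.sum_add_distrib, Finset.sum_sub_distrib, ← Finset.mul_sum]
    simp only [← Finset.mul_sum] at e3
    rw [e1, e2, e3]; ring
  have hadj : ∀ a b, 0 < w a b → u a = u b := by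
    intro a b hab
    have hn : ∀ i j, 0 ≤ w i j * (u i - u j) ^ 2 := fun i j => mul_nonneg (hnn i j) (sq_nonneg _)
    have h1 := (Finset.sum_eq_zero_iff_of_nonneg
      (fun i _ => Finset.sum_nonneg fun j _ => hn i j)).1 h0 a (Finset.mem_univ a)
    have h2 := (Finset.sum_eq_zero_iff_of_nonneg (fun j _ => hn a j)).1 h1 b (Finset.mem_univ b)
    rcases mul_eq_zero.1 h2 with h | h
    · exact absurd h hab.ne'
    · exact sub_eq_zero.1 (pow_eq_zero_iff (two_ne_zero) |>.1 h)
  have := hconn i j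
  induction this with
  | refl => rfl
  | tail _ h ih => exact ih.trans (hadj _ _ h)

theorem spectral_lt (w : V → V → ℝ)
    (hsym : ∀ i j, w i j = w j i) (hnn : ∀ i j, 0 ≤ w i j)
    (hdeg : ∀ i, 0 < deg w i) (hconn : Conn w) (l : ℕ) (s : ℝ)
    (H : ∀ μ, IsEigen w μ → μ ≠ 0 → (1 - μ) ^ l < s)
    (f : V → ℝ) (hf : f ≠ 0) (hf0 : ∑ i, deg w i * f i = 0) :
    ∑ i, ∑ j, f i * wl w l i j * f j < s * ∑ i, deg w i * f i ^ 2 := by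
  have hA := nA_herm w hsym
  set A := nA w with hAdef
  set b := hA.eigenvectorBasis with hb
  set r : V → ℝ := fun i => Real.sqrt (deg w i) with hr
  have hr0 : ∀ i, 0 < r i := fun i => Real.sqrt_pos.2 (hdeg i)
  have hrr : ∀ i, r i * r i = deg w i := fun i => Real.mul_self_sqrt (hdeg i).le
  set g : EuclideanSpace ℝ V := WithLp.toLp 2 (fun i => r i * f i) with hg
  set Mg : EuclideanSpace ℝ V := WithLp.toLp 2 ((A ^ l).mulVec g) with hMg
  set m : V → ℝ := hA.eigenvalues with hm
  have hvec : ∀ k i, ∑ j, A i j * b k j = m k * b k i := by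
    intro k i
    have := congrFun (hA.mulVec_eigenvectorBasis k) i
    simpa [Matrix.mulVec, dotProduct] using this
  have hpow : ∀ n k i, ∑ j, (A ^ n) i j * b k j = m k ^ n * b k i := by
    intro n k
    induction n with
    | zero => intro i; simp [Matrix.one_apply]
    | succ n ih =>
      intro i
      simp only [pow_succ, Matrix.mul_apply, Finset.sum_mul]
      rw [Finset.sum_comm]
      have : ∀ p, ∑ j, (A ^ n) i p * A p j * b k j = m k * ((A ^ n) i p * b k p) := by
        intro p
        simp only [mul_assoc]
        rw [← Finset.mul_sum, hvec]; ring
      simp only [this]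
      rw [← Finset.mul_sum, ih]; ring
  have hsymA : ∀ i j, (A ^ l) i j = (A ^ l) j i := by
    intro i j
    have h := (hA.pow l).apply i j
    simpa using h.symm
  have hMb : ∀ k, inner ℝ (b k) Mg = m k ^ l * inner ℝ (b k) g := by
    intro k
    simp only [PiLp.inner_apply, RCLike.inner_apply, conj_trivial, hMg, Matrix.mulVec, dotProduct]
    simp only [Finset.sum_mul, Finset.mul_sum]
    rw [Finset.sum_comm]
    refine Finset.sum_congr rfl fun j _ => ?_
    have h1 := hpow l k j
    calc ∑ i, (A ^ l) i j * g j * b k i = g j * ∑ i, (A ^ l) j i * b k i := by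
          rw [Finset.mul_sum]
          refine Finset.sum_congr rfl fun i _ => ?_
          rw [hsymA i j]; ring
      _ = _ := by rw [h1]; ring
  set a : V → ℝ := fun k => inner ℝ (b k) g with ha
  have hQ : ∑ i, ∑ j, f i * wl w l i j * f j = ∑ k, m k ^ l * a k ^ 2 := by
    have h1 : ∑ i, ∑ j, f i * wl w l i j * f j = inner ℝ g Mg := by
      simp only [PiLp.inner_apply, RCLike.inner_apply, conj_trivial, hMg, Matrix.mulVec, dotProduct]
      refine Finset.sum_congr rfl fun i _ => ?_
      rw [Finset.sum_mul]
      refine Finset.sum_congr rfl fun j _ => ?_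
      rw [wl_eq w hdeg]
      simp only [hg, hr]
      ring
    rw [h1, ← b.sum_inner_mul_inner]
    refine Finset.sum_congr rfl fun k _ => ?_
    rw [hMb, real_inner_comm]; simp only [ha]; ring
  have hD : ∑ i, deg w i * f i ^ 2 = ∑ k, a k ^ 2 := by
    have h1 : ∑ i, deg w i * f i ^ 2 = inner ℝ g g := by
      simp only [PiLp.inner_apply, RCLike.inner_apply, conj_trivial]
      refine Finset.sum_congr rfl fun i _ => ?_
      rw [← hrr]; simp only [hg]; ring
    rw [h1, ← b.sum_inner_mul_inner]
    refine Finset.sum_congr rfl fun k _ => ?_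
    rw [real_inner_comm]; simp only [ha]; ring
  have hpos : 0 < ∑ k, a k ^ 2 := by
    rw [← hD]
    obtain ⟨i, hi⟩ := Function.ne_iff.1 hf
    refine Finset.sum_pos' (fun i _ => mul_nonneg (hdeg i).le (sq_nonneg _)) ⟨i, Finset.mem_univ i, ?_⟩
    exact mul_pos (hdeg i) (pow_pos (lt_of_le_of_ne (abs_nonneg _) (abs_pos.2 hi).ne) 2 |> fun h => by rwa [sq_abs] at h)
  have key : ∀ k, a k ≠ 0 → m k ^ l < s := by
    intro k hk
    set u : V → ℝ := fun i => b k i / r i with hu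
    have hPu : ∀ i, ∑ j, w i j * u j = deg w i * (m k * u i) := by
      intro i
      have h1 := hvec k i
      have hri := (hr0 i).ne'
      have : ∀ j, w i j * u j = r i * (A i j * b k j) := by
        intro j
        have hrj := (hr0 j).ne'
        simp only [hu, hAdef, nA, Matrix.of_apply]
        change w i j * (b k j / r j) = r i * (w i j / (r i * r j) * b k j)
        field_simp
      simp only [this]
      rw [← Finset.mul_sum, h1, ← hrr]
      simp only [hu]
      field_simp
    have hEig : IsEigen w (1 - m k) := by
      refine ⟨u, ?_, fun i => ?_⟩
      · intro h0
        apply hk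
        have : b k = 0 := by
          ext i
          have h := congrFun h0 i
          have hri := (hr0 i).ne'
          simp only [hu, Pi.zero_apply, div_eq_zero_iff, hri, or_false] at h
          simpa using h
        simp [ha, this]
      · have := (hdeg i).ne'
        rw [lap, hPu]; field_simp
    have hne : 1 - m k ≠ 0 := by
      intro h1
      have hm1 : m k = 1 := by linarith
      have hc := harmonic_const w hsym hnn hconn u (fun i => by rw [hPu, hm1, one_mul])
      apply hk
      obtain ⟨i0, -⟩ := Function.ne_iff.1 hf
      have : a k = u i0 * ∑ i, deg w i * f i := by
        simp only [ha, PiLp.inner_apply, RCLike.inner_apply, conj_trivial]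
        rw [Finset.mul_sum]
        refine Finset.sum_congr rfl fun i _ => ?_
        rw [hc i0 i, ← hrr]
        have hri := (hr0 i).ne'
        simp only [hu, hg]
        field_simp
      rw [this, hf0, mul_zero]
    have := H _ hEig hne
    simpa using this
  rw [hQ, hD, Finset.mul_sum]
  obtain ⟨k, -, hk⟩ := Finset.exists_ne_zero_of_sum_ne_zero hpos.ne'
  have hk' : a k ≠ 0 := fun h => hk (by rw [h]; ring)
  refine Finset.sum_lt_sum (fun k _ => ?_) ⟨k, Finset.mem_univ k, ?_⟩
  · by_cases h : a k = 0
    · simp [h]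
    · exact mul_le_mul_of_nonneg_right (key k h).le (sq_nonneg _)
  · exact mul_lt_mul_of_pos_right (key k hk') (by positivity)

theorem cheeger_attained (w : V → V → ℝ)
    (hdeg : ∀ i, 0 < deg w i) (hN : 2 ≤ Fintype.card V) :
    ∃ U : Finset V, U.Nonempty ∧ U ≠ Finset.univ ∧
    vol w U ≤ vol w Finset.univ / 2 ∧ cheeger w = eW w U Uᶜ / vol w U := by
  have hne : { r : ℝ | ∃ U : Finset V, U.Nonempty ∧ U ≠ Finset.univ ∧
    vol w U ≤ vol w Finset.univ / 2 ∧ r = eW w U Uᶜ / vol w U }.Nonempty := by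
    obtain ⟨i, j, hij⟩ := Fintype.one_lt_card_iff.1 (show 1 < Fintype.card V by omega)
    have hs : vol w {i} + vol w {i}ᶜ = vol w Finset.univ := Finset.sum_add_sum_compl _ _
    by_cases h : vol w {i} ≤ vol w Finset.univ / 2
    · refine ⟨_, {i}, by simp, ?_, h, rfl⟩
      intro he
      have : j ∈ ({i} : Finset V) := he ▸ Finset.mem_univ j
      exact hij (Finset.mem_singleton.1 this).symm
    · refine ⟨_, {i}ᶜ, ⟨j, by simp [hij.symm]⟩, ?_, by linarith, rfl⟩
      intro he
      have : i ∈ ({i}ᶜ : Finset V) := he ▸ Finset.mem_univ i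
      simp at this
  have hfin : { r : ℝ | ∃ U : Finset V, U.Nonempty ∧ U ≠ Finset.univ ∧
    vol w U ≤ vol w Finset.univ / 2 ∧ r = eW w U Uᶜ / vol w U }.Finite := by
    refine (Set.finite_range fun U : Finset V => eW w U Uᶜ / vol w U).subset ?_
    rintro r ⟨U, -, -, -, h⟩
    exact ⟨U, h.symm⟩
  exact hne.csInf_mem hfin

theorem exists_eigen (w : V → V → ℝ)
    (hsym : ∀ i j, w i j = w j i) (hnn : ∀ i j, 0 ≤ w i j)
    (hdeg : ∀ i, 0 < deg w i) (hconn : Conn w) (hN : 2 ≤ Fintype.card V) (l : ℕ) :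
    ∃ μ, IsEigen w μ ∧ μ ≠ 0 ∧ 1 - 2 * cheeger (wl w l) ≤ (1 - μ) ^ l := by
  by_contra hcon
  push Not at hcon
  have hd : deg (wl w l) = deg w := funext (deg_wl w hdeg l)
  obtain ⟨U, hU, hUn, hvol, hch⟩ := cheeger_attained (wl w l) (by rw [hd]; exact hdeg) hN
  have hv : ∀ S, vol (wl w l) S = vol w S := fun S => by simp only [vol, hd]
  rw [hv] at hch
  rw [hv, hv] at hvol
  have hUpos : 0 < vol w U := Finset.sum_pos (fun i _ => hdeg i) hU
  have hVpos : 0 < vol w Finset.univ :=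
    Finset.sum_pos (fun i _ => hdeg i) (hU.mono (Finset.subset_univ U))
  have hE : 0 ≤ eW (wl w l) U Uᶜ :=
    Finset.sum_nonneg fun i _ => Finset.sum_nonneg fun j _ => wl_nonneg w hnn hdeg l i j
  set h := cheeger (wl w l) with hh
  have hh0 : 0 ≤ h := hch ▸ div_nonneg hE hUpos.le
  have hhE : eW (wl w l) U Uᶜ = h * vol w U := by rw [hch]; field_simp
  set x := vol w U / vol w Finset.univ with hx
  have hxV : x * vol w Finset.univ = vol w U := by rw [hx]; field_simp
  have hx2 : x ≤ 1 / 2 := by rw [hx, div_le_iff₀ hVpos]; linarith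
  have hsplit : eW (wl w l) U U + eW (wl w l) U Uᶜ = vol w U := by
    rw [← hv]
    simp only [eW, vol, deg]
    rw [← Finset.sum_add_distrib]
    exact Finset.sum_congr rfl fun i _ => Finset.sum_add_sum_compl _ _
  let c : V → ℝ := fun i => if i ∈ U then 1 else 0
  have hcs : ∀ F : V → ℝ, ∑ i, c i * F i = ∑ i ∈ U, F i := by
    intro F; simp [c, Finset.sum_ite_mem]
  let f : V → ℝ := fun i => c i - x
  have hdc : ∑ i, deg w i * c i = vol w U := by
    simp only [mul_comm (deg w _), hcs]; rfl
  have hdV : ∑ i, deg w i = vol w Finset.univ := rfl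
  have hf0 : ∑ i, deg w i * f i = 0 := by
    simp only [f, mul_sub, Finset.sum_sub_distrib, ← Finset.sum_mul]
    rw [hdc, hdV, mul_comm, hxV]; ring
  have hf : f ≠ 0 := by
    intro h0
    obtain ⟨i, hi⟩ := hU
    have := congrFun h0 i
    simp only [f, c, hi, if_true, Pi.zero_apply] at this
    linarith
  have hff : ∑ i, deg w i * f i ^ 2 = vol w U * (1 - x) := by
    have : ∀ i, deg w i * f i ^ 2 = deg w i * c i - 2 * x * (deg w i * c i) + x ^ 2 * deg w i := by
      intro i
      have : c i ^ 2 = c i := by simp only [c]; split_ifs <;> norm_num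
      simp only [f]
      linear_combination deg w i * this
    simp only [this, Finset.sum_add_distrib, Finset.sum_sub_distrib, ← Finset.mul_sum]
    rw [hdc, hdV]
    linear_combination x * hxV
  have hrow : ∀ i, ∑ j, wl w l i j = deg w i := fun i => deg_wl w hdeg l i
  have hcol : ∀ j, ∑ i, wl w l i j = deg w j := fun j => by
    rw [← hrow j]; exact Finset.sum_congr rfl fun i _ => wl_symm w hsym hdeg l i j
  have hQ : ∑ i, ∑ j, f i * wl w l i j * f j = eW (wl w l) U U - x * vol w U := by
    have e1 : ∑ i, ∑ j, c i * (c j * wl w l i j) = eW (wl w l) U U := by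
      simp only [← Finset.mul_sum, hcs]; rfl
    have e2 : ∑ i, ∑ j, c i * wl w l i j = vol w U := by
      simp only [← Finset.mul_sum, hcs, hrow]; rfl
    have e3 : ∑ i, ∑ j, c j * wl w l i j = vol w U := by
      rw [Finset.sum_comm]
      simp only [← Finset.mul_sum, hcs, hcol]; rfl
    have e4 : ∑ i, ∑ j, wl w l i j = vol w Finset.univ := by
      simp only [hrow]; rfl
    have : ∀ i j, f i * wl w l i j * f j = c i * (c j * wl w l i j) - x * (c i * wl w l i j)
        - x * (c j * wl w l i j) + x ^ 2 * wl w l i j := by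
      intro i j; simp only [f]; ring
    have : ∑ i, ∑ j, f i * wl w l i j * f j = ∑ i, ∑ j, c i * (c j * wl w l i j)
        - x * ∑ i, ∑ j, c i * wl w l i j
        - x * ∑ i, ∑ j, c j * wl w l i j + x ^ 2 * ∑ i, ∑ j, wl w l i j := by
      simp only [this, Finset.sum_add_distrib, Finset.sum_sub_distrib, Finset.mul_sum]
    rw [this, e1, e2, e3, e4]
    linear_combination x * hxV
  have := spectral_lt w hsym hnn hdeg hconn l (1 - 2 * h) hcon f hf hf0
  rw [hQ, hff] at this
  have h3 : 0 ≤ h * vol w U * (1 - 2 * x) :=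
    mul_nonneg (mul_nonneg hh0 hUpos.le) (by linarith)
  nlinarith

/-- Corollary: upper bound for `λ₁` or lower bound for `λ_{N-1}` via
the Cheeger constant `h[l]` of the neighborhood graph. Assume `2 h[l] ≤ 1`. If `l` is
even, then `λ₁ ≤ 1 - (1 - 2h[l])^{1/l}` or `λ_{N-1} ≥ 1 + (1 - 2h[l])^{1/l}`; if `l` is
odd, then `λ₁ ≤ 1 - (1 - 2h[l])^{1/l}`. -/
theorem eigenvalue_alternative_from_neighborhood_cheeger
    (w : V → V → ℝ)
    (hsym : ∀ i j, w i j = w j i) (hnn : ∀ i j, 0 ≤ w i j)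
    (hdeg : ∀ i, 0 < deg w i) (hconn : Conn w) (hN : 2 ≤ Fintype.card V)
    (lam1 lamN : ℝ)
    (hlam1 : IsEigen w lam1) (hlam1pos : 0 < lam1)
    (hlam1min : ∀ μ, IsEigen w μ → μ ≠ 0 → lam1 ≤ μ)
    (hlamN : IsEigen w lamN) (hlamNmax : ∀ μ, IsEigen w μ → μ ≤ lamN)
    (l : ℕ) (hl : 1 ≤ l)
    (hhl : 2 * cheeger (wl w l) ≤ 1) :
    (Even l →
        lam1 ≤ 1 - (1 - 2 * cheeger (wl w l)) ^ ((1 : ℝ) / l) ∨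
          1 + (1 - 2 * cheeger (wl w l)) ^ ((1 : ℝ) / l) ≤ lamN) ∧
      (Odd l → lam1 ≤ 1 - (1 - 2 * cheeger (wl w l)) ^ ((1 : ℝ) / l)) := by
  obtain ⟨μ, hμ, hμ0, hle⟩ := exists_eigen w hsym hnn hdeg hconn hN l
  have h1 := hlam1min μ hμ hμ0
  have h2 := hlamNmax μ hμ
  set s := 1 - 2 * cheeger (wl w l) with hs
  have hs0 : 0 ≤ s := by linarith
  have hl0 : l ≠ 0 := by omega
  set t := s ^ ((1 : ℝ) / l) with ht
  have ht0 : 0 ≤ t := Real.rpow_nonneg hs0 _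
  have htl : t ^ l = s := by
    rw [ht, one_div]; exact Real.rpow_inv_natCast_pow hs0 hl0
  rw [← htl] at hle
  refine ⟨fun he => ?_, fun ho => ?_⟩
  · rw [← he.pow_abs (1 - μ)] at hle
    have h3 := (pow_le_pow_iff_left₀ ht0 (abs_nonneg _) hl0).1 hle
    rcases le_abs.1 h3 with h | h
    · left; linarith
    · right; linarith
  · have h3 := ho.strictMono_pow.le_iff_le.1 hle
    linarith


end BJ
end
end

section
/- Let u : V → ℝ be an eigenfunction of Δ for the eigenvalue λ, i.e. Δu = λu with u not identically zero. Then ∑_{i∈V} (1/d_i) ∑_{j,k∈V} w_{ij} w_{ik} (u(j) − u(k))² = 2λ(2−λ)·∑_{i∈V} d_i u(i)². Consequently, if λ ≠ 0, then 2 − λ = ( ∑_{i∈V} (1/d_i) ∑_{j,k∈V} w_{ij} w_{ik} (u(j) − u(k))² ) / ( ∑_{i∈V} ∑_{j∈V} w_{ij} (u(i) − u(j))² ). -/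
open Finset

noncomputable section

namespace BJ

variable {V : Type*} [Fintype V] [DecidableEq V]

/-- Lemma 22 / identity (highest1)-(highest2).
If `u` is an eigenfunction of `Δ` for the eigenvalue `λ`, then
`∑_i (1/d_i) ∑_{j,k} w_ij w_ik (u(j)-u(k))² = 2λ(2-λ) ∑_i d_i u(i)²`, and hence for
`λ ≠ 0`,
`2 - λ = (∑_i (1/d_i) ∑_{j,k} w_ij w_ik (u(j)-u(k))²) / (∑_i ∑_j w_ij (u(i)-u(j))²)`. -/
theorem eigenfunction_two_sub_lambda_identity
    (w : V → V → ℝ)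
    (hsym : ∀ i j, w i j = w j i) (hnn : ∀ i j, 0 ≤ w i j)
    (hdeg : ∀ i, 0 < deg w i) (hconn : Conn w) (hN : 2 ≤ Fintype.card V)
    (lam : ℝ) (u : V → ℝ) (hu : u ≠ 0) (heig : ∀ i, lap w u i = lam * u i) :
    (∑ i, (1 / deg w i) * ∑ j, ∑ k, w i j * w i k * (u j - u k) ^ 2) =
        2 * lam * (2 - lam) * ∑ i, deg w i * u i ^ 2 ∧
      (lam ≠ 0 → 2 - lam =
        (∑ i, (1 / deg w i) * ∑ j, ∑ k, w i j * w i k * (u j - u k) ^ 2) /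
          (∑ i, ∑ j, w i j * (u i - u j) ^ 2)) := by
  have hS : ∀ i, ∑ j, w i j * u j = (1 - lam) * (deg w i * u i) := by
    intro i
    have h := heig i
    have hd := (hdeg i).ne'
    unfold lap at h
    field_simp at h
    linarith
  have hQ : ∑ i, ∑ j, w i j * u j ^ 2 = ∑ i, deg w i * u i ^ 2 := by
    rw [Finset.sum_comm]
    refine Finset.sum_congr rfl fun j _ => ?_
    rw [deg, Finset.sum_mul]
    exact Finset.sum_congr rfl fun i _ => by rw [hsym i j]
  have hin : ∀ i, ∑ j, ∑ k, w i j * w i k * (u j - u k) ^ 2 =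
      2 * deg w i * (∑ j, w i j * u j ^ 2) - 2 * (∑ j, w i j * u j) ^ 2 := by
    intro i
    have e : ∀ j, ∑ k, w i j * w i k * (u j - u k) ^ 2 =
        (w i j * u j ^ 2) * deg w i - (w i j * u j) * (2 * ∑ k, w i k * u k)
          + w i j * ∑ k, w i k * u k ^ 2 := by
      intro j
      rw [deg, Finset.mul_sum, Finset.mul_sum, Finset.mul_sum, Finset.mul_sum,
        ← Finset.sum_sub_distrib, ← Finset.sum_add_distrib]
      exact Finset.sum_congr rfl fun k _ => by ring
    rw [Finset.sum_congr rfl fun j _ => e j, Finset.sum_add_distrib, Finset.sum_sub_distrib,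
      ← Finset.sum_mul, ← Finset.sum_mul, ← Finset.sum_mul]
    change _ + deg w i * _ = _
    ring
  have h1 : (∑ i, (1 / deg w i) * ∑ j, ∑ k, w i j * w i k * (u j - u k) ^ 2) =
        2 * lam * (2 - lam) * ∑ i, deg w i * u i ^ 2 := by
    have e : ∀ i, (1 / deg w i) * ∑ j, ∑ k, w i j * w i k * (u j - u k) ^ 2 =
        2 * (∑ j, w i j * u j ^ 2) - 2 * (1 - lam) ^ 2 * (deg w i * u i ^ 2) := by
      intro i
      have hd := (hdeg i).ne'
      rw [hin, hS]
      field_simp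
    rw [Finset.sum_congr rfl fun i _ => e i, Finset.sum_sub_distrib, ← Finset.mul_sum,
      ← Finset.mul_sum, hQ]
    ring
  have h2 : ∑ i, ∑ j, w i j * (u i - u j) ^ 2 = 2 * lam * ∑ i, deg w i * u i ^ 2 := by
    have e : ∀ i, ∑ j, w i j * (u i - u j) ^ 2 =
        (2 * lam - 1) * (deg w i * u i ^ 2) + ∑ j, w i j * u j ^ 2 := by
      intro i
      have e' : ∑ j, w i j * (u i - u j) ^ 2 =
          deg w i * u i ^ 2 - 2 * u i * (∑ j, w i j * u j) + ∑ j, w i j * u j ^ 2 := by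
        rw [deg, Finset.sum_mul, Finset.mul_sum,
          ← Finset.sum_sub_distrib, ← Finset.sum_add_distrib]
        exact Finset.sum_congr rfl fun k _ => by ring
      rw [e', hS]
      ring
    rw [Finset.sum_congr rfl fun i _ => e i, Finset.sum_add_distrib, ← Finset.mul_sum, hQ]
    ring
  refine ⟨h1, fun hl => ?_⟩
  have hpos : 0 < ∑ i, deg w i * u i ^ 2 := by
    obtain ⟨i, hi⟩ := Function.ne_iff.mp hu
    have hi' : u i ≠ 0 := hi
    refine Finset.sum_pos' (fun j _ => mul_nonneg (hdeg j).le (sq_nonneg _))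
      ⟨i, Finset.mem_univ i, mul_pos (hdeg i) (by positivity)⟩
  have hne := hpos.ne'
  rw [h1, h2]
  field_simp

end BJ
end
end

section
/- Assume Γ contains at least one triangle, i.e. there exist distinct vertices i,j,k with w_{ij}, w_{jk}, w_{ki} all positive. Say an edge e = (i,k) (with w_{ik} > 0) belongs to △ if there is a vertex l with w_{il} > 0 and w_{kl} > 0, and say a vertex i belongs to △ if some edge at i belongs to △. Set α_i := (∑_{j : (i,j)∈△} w_{ij})/d_i, C_0 := min over edges e = (i,j) with w_{ij} > 0 of (α_i + α_j)/2, W := ( min over vertices i ∈ △ of min over k with (i,k) ∈ △ of ∑_{l : (i,k,l) forms a triangle} (d_i/d_l)·(w_{li} w_{lk}/w_{ik}) )^{1/2}, and d̄ := max_{i ∈ △} d_i. Then the largest eigenvalue of Δ satisfies λ_{N−1} ≤ 2 − (1/(2 d̄))·C_0·(W/(1+W))². -/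
open Finset

noncomputable section

namespace BJ

variable {V : Type*} [Fintype V] [DecidableEq V]

theorem core_alg (x c o a : ℝ) (hx : 0 ≤ x) (hc : 0 ≤ c) (hc1 : c ≤ 1) (ho : 0 ≤ o) (ho1 : o ≤ 1)
    (h1 : 4 * a * o ≤ 2 * (2 - x) * x + 2 * o * x)
    (h2 : -(1 / 2 * (1 - c) * x) ≤ (1 - x) * (a - c)) : c * o / 2 ≤ x := by
  by_contra hcon
  push Not at hcon
  have hco : c * o ≤ c := by nlinarith
  have hx2 : 2 * x < c := by linarith
  have hxx : 0 < 1 - x := by linarith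
  have e1 : (1 - x) * (4 * a * o) ≤ (1 - x) * (2 * (2 - x) * x + 2 * o * x) :=
    mul_le_mul_of_nonneg_left h1 hxx.le
  have e2 := mul_le_mul_of_nonneg_left h2 ho
  have hK : o * (2 * c - c * x - 2 * x + x ^ 2) ≤ (1 - x) * (2 - x) * x := by nlinarith
  have hK0 : 0 < 2 * c - c * x - 2 * x + x ^ 2 := by nlinarith
  have e3 := mul_le_mul_of_nonneg_left hK hc
  have e4 : 2 * x * (2 * c - c * x - 2 * x + x ^ 2) < (c * o) * (2 * c - c * x - 2 * x + x ^ 2) :=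
    mul_lt_mul_of_pos_right (by linarith) hK0
  have e5 : x * (2 * c + c * x - 4 * x + 2 * x ^ 2 - c * x ^ 2) < 0 := by nlinarith
  have e6 : 0 ≤ 2 * c + c * x - 4 * x + 2 * x ^ 2 - c * x ^ 2 := by
    have : c * x * x ≤ c * x * 1 := mul_le_mul_of_nonneg_left (by linarith) (by positivity)
    nlinarith [sq_nonneg x]
  nlinarith [mul_nonneg hx e6]

theorem core_bound (w T : V → V → ℝ) (d alpha u : V → ℝ) (c o lam : ℝ)
    (hsym : ∀ i j, w i j = w j i) (hnn : ∀ i j, 0 ≤ w i j)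
    (hd : ∀ i, ∑ j, w i j = d i) (hdp : ∀ i, 0 < d i)
    (hTs : ∀ i j, T i j = T j i) (hT0 : ∀ i j, 0 ≤ T i j) (hTw : ∀ i j, T i j ≤ w i j)
    (ha : ∀ i, ∑ j, T i j = alpha i * d i) (hc : 0 ≤ c) (hc1 : c ≤ 1) (ho : 0 ≤ o) (ho1 : o ≤ 1)
    (hT : ∀ i k, o * T i k ≤ ∑ l, w l i * w l k / d l)
    (hca : ∀ i j, 0 < w i j → c ≤ (alpha i + alpha j) / 2)
    (hu : u ≠ 0) (hev : ∀ i, ∑ j, w i j * u j = (1 - lam) * (d i * u i)) :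
    lam ≤ 2 - c * o / 2 := by
  have ha1 : ∀ i, alpha i ≤ 1 := by
    intro i
    have : alpha i * d i ≤ d i := by
      rw [← ha i]; conv_rhs => rw [← hd i]
      exact sum_le_sum fun j _ => hTw i j
    have := hdp i
    by_contra h
    push Not at h
    nlinarith
  set D := ∑ i, d i * u i ^ 2 with hD
  set A := ∑ i, alpha i * d i * u i ^ 2 with hA
  have hDpos : 0 < D := by
    obtain ⟨i, hi⟩ := Function.ne_iff.mp hu
    refine sum_pos' (fun i _ => mul_nonneg (hdp i).le (sq_nonneg _)) ⟨i, mem_univ _, ?_⟩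
    have : 0 < u i ^ 2 := by
      have : u i ≠ 0 := hi
      positivity
    exact mul_pos (hdp i) this
  have left : ∀ (S : V → V → ℝ) (e : V → ℝ) , (∀ i, ∑ j, S i j = e i) →
      ∑ i, ∑ j, S i j * u i ^ 2 = ∑ i, e i * u i ^ 2 := by
    intro S e h
    refine sum_congr rfl fun i _ => ?_
    rw [← sum_mul, h]
  have right : ∀ (S : V → V → ℝ) (e : V → ℝ) , (∀ i j, S i j = S j i) → (∀ i, ∑ j, S i j = e i) →
      ∑ i, ∑ j, S i j * u j ^ 2 = ∑ i, e i * u i ^ 2 := by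
    intro S e hs h
    rw [sum_comm, ← left S e h]
    exact sum_congr rfl fun i _ => sum_congr rfl fun j _ => by rw [hs]
  have cross : ∑ i, ∑ j, w i j * (u i * u j) = (1 - lam) * D := by
    rw [hD, mul_sum]
    refine sum_congr rfl fun i _ => ?_
    have : ∑ j, w i j * (u i * u j) = u i * ∑ j, w i j * u j := by
      rw [mul_sum]; exact sum_congr rfl fun j _ => by ring
    rw [this, hev]; ring
  have crossA : ∑ i, ∑ j, w i j * ((alpha i + alpha j) / 2) * (u i * u j) = (1 - lam) * A := by
    have h1 : ∑ i, ∑ j, w i j * alpha i * (u i * u j) = (1 - lam) * A := by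
      rw [hA, mul_sum]
      refine sum_congr rfl fun i _ => ?_
      have : ∑ j, w i j * alpha i * (u i * u j) = alpha i * u i * ∑ j, w i j * u j := by
        rw [mul_sum]; exact sum_congr rfl fun j _ => by ring
      rw [this, hev]; ring
    have h2 : ∑ i, ∑ j, w i j * alpha j * (u i * u j) = (1 - lam) * A := by
      rw [← h1, sum_comm]
      exact sum_congr rfl fun i _ => sum_congr rfl fun j _ => by rw [hsym j i]; ring
    have h3 : ∑ i, ∑ j, w i j * ((alpha i + alpha j) / 2) * (u i * u j) =
        1 / 2 * (∑ i, ∑ j, w i j * alpha i * (u i * u j)) +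
        1 / 2 * (∑ i, ∑ j, w i j * alpha j * (u i * u j)) := by
      simp only [mul_sum, ← sum_add_distrib]
      exact sum_congr rfl fun i _ => sum_congr rfl fun j _ => by ring
    rw [h3, h1, h2]; ring
  have expP : ∀ S : V → V → ℝ, ∑ i, ∑ j, S i j * (u i + u j) ^ 2 =
      ∑ i, ∑ j, S i j * u i ^ 2 + ∑ i, ∑ j, S i j * u j ^ 2
        + 2 * ∑ i, ∑ j, S i j * (u i * u j) := by
    intro S
    simp only [mul_sum, ← sum_add_distrib]
    exact sum_congr rfl fun i _ => sum_congr rfl fun j _ => by ring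
  have expM : ∀ S : V → V → ℝ, ∑ i, ∑ j, S i j * (u i - u j) ^ 2 =
      ∑ i, ∑ j, S i j * u i ^ 2 + ∑ i, ∑ j, S i j * u j ^ 2
        - 2 * ∑ i, ∑ j, S i j * (u i * u j) := by
    intro S
    simp only [mul_sum, ← sum_add_distrib, ← sum_sub_distrib]
    exact sum_congr rfl fun i _ => sum_congr rfl fun j _ => by ring
  have hE : ∑ i, ∑ j, w i j * (u i + u j) ^ 2 = 2 * (2 - lam) * D := by
    rw [expP, left w d hd, right w d hsym hd, cross, ← hD]; ring
  have hx : 0 ≤ 2 - lam := by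
    have : 0 ≤ 2 * (2 - lam) * D := by
      rw [← hE]
      exact sum_nonneg fun i _ => sum_nonneg fun j _ => mul_nonneg (hnn i j) (sq_nonneg _)
    by_contra h
    push Not at h
    nlinarith
  set Q : V → V → ℝ := fun i k => ∑ l, w l i * w l k / d l with hQ
  have hQs : ∀ i j, Q i j = Q j i := fun i j => sum_congr rfl fun l _ => by ring
  have hQd : ∀ i, ∑ k, Q i k = d i := by
    intro i
    simp only [hQ]
    rw [sum_comm]
    rw [← hd i]
    refine sum_congr rfl fun l _ => ?_
    have : ∑ k, w l i * w l k / d l = w l i / d l * ∑ k, w l k := by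
      rw [mul_sum]; exact sum_congr rfl fun j _ => by ring
    rw [this, hd, hsym i l]
    have := (hdp l).ne'
    field_simp
  have hQx : ∑ i, ∑ k, Q i k * (u i * u k) = (1 - lam) ^ 2 * D := by
    have h1 : ∑ i, ∑ k, Q i k * (u i * u k) =
        ∑ i, ∑ k, ∑ l, w l i * w l k / d l * (u i * u k) := by
      simp only [hQ, sum_mul]
    rw [h1, hD, mul_sum]
    have h2 : ∑ i, ∑ k, ∑ l, w l i * w l k / d l * (u i * u k) =
        ∑ l, ∑ i, ∑ k, w l i * w l k / d l * (u i * u k) := by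
      refine Eq.trans (sum_congr rfl fun i _ => sum_comm) ?_
      exact sum_comm
    rw [h2]
    refine sum_congr rfl fun l _ => ?_
    have h3 : ∑ i, ∑ k, w l i * w l k / d l * (u i * u k) =
        (∑ i, w l i * u i) * (∑ k, w l k * u k) / d l := by
      rw [sum_mul_sum, sum_div]
      refine sum_congr rfl fun i _ => ?_
      rw [sum_div]
      exact sum_congr rfl fun k _ => by ring
    rw [h3, hev]
    have := (hdp l).ne'
    field_simp
  have hF : ∑ i, ∑ k, Q i k * (u i - u k) ^ 2 = 2 * lam * (2 - lam) * D := by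
    rw [expM, left Q d hQd, right Q d hQs hQd, hQx, ← hD]; ring
  have hF1 : o * ∑ i, ∑ k, T i k * (u i - u k) ^ 2 ≤ 2 * lam * (2 - lam) * D := by
    rw [← hF]
    simp only [mul_sum]
    refine sum_le_sum fun i _ => sum_le_sum fun k _ => ?_
    rw [← mul_assoc]
    exact mul_le_mul_of_nonneg_right (hT i k) (sq_nonneg _)
  have hF2 : ∑ i, ∑ k, T i k * (u i + u k) ^ 2 ≤ 2 * (2 - lam) * D := by
    rw [← hE]
    exact sum_le_sum fun i _ => sum_le_sum fun k _ =>
      mul_le_mul_of_nonneg_right (hTw i k) (sq_nonneg _)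
  have hF4 : ∑ i, ∑ k, T i k * (u i - u k) ^ 2 + ∑ i, ∑ k, T i k * (u i + u k) ^ 2 = 4 * A := by
    rw [expM, expP, left T (fun i => alpha i * d i) ha,
      right T (fun i => alpha i * d i) hTs ha, ← hA]; ring
  have hF3 : -(1 / 2 * (1 - c) * (2 - lam) * D) ≤ (lam - 1) * (A - c * D) := by
    have h1 : ∑ i, ∑ j, (w i j * ((alpha i + alpha j) / 2) * (u i * u j) - c * (w i j * (u i * u j)))
        ≤ ∑ i, ∑ j, (1 - c) / 4 * (w i j * (u i + u j) ^ 2) := by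
      refine sum_le_sum fun i _ => sum_le_sum fun j _ => ?_
      rcases (hnn i j).eq_or_lt with h | h
      · simp [← h]
      · have hb := hca i j h
        have hb1 : (alpha i + alpha j) / 2 ≤ 1 := by linarith [ha1 i, ha1 j]
        have e1 : ((alpha i + alpha j) / 2 - c) * (u i * u j) ≤ (1 - c) / 4 * (u i + u j) ^ 2 := by
          have : u i * u j ≤ (u i + u j) ^ 2 / 4 := by nlinarith [sq_nonneg (u i - u j)]
          have f1 := mul_le_mul_of_nonneg_left this (sub_nonneg.mpr hb)
          have f2 : ((alpha i + alpha j) / 2 - c) * ((u i + u j) ^ 2 / 4) ≤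
            (1 - c) * ((u i + u j) ^ 2 / 4) :=
            mul_le_mul_of_nonneg_right (by linarith) (by positivity)
          linarith
        have := mul_le_mul_of_nonneg_left e1 h.le
        linarith
    simp only [sum_sub_distrib, ← mul_sum] at h1
    rw [crossA, cross, hE] at h1
    linarith
  have key := core_alg (2 - lam) c o (A / D) hx hc hc1 ho ho1 ?_ ?_
  · linarith
  · have h5 : 4 * A * o ≤ 2 * lam * (2 - lam) * D + o * (2 * (2 - lam) * D) := by
      rw [← hF4]
      have := mul_le_mul_of_nonneg_left hF2 ho
      linarith
    have : 4 * (A / D) * o = 4 * A * o / D := by ring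
    rw [this, div_le_iff₀ hDpos]
    linarith
  · have : (1 - (2 - lam)) * (A / D - c) = (lam - 1) * (A - c * D) / D := by
      field_simp
      ring
    rw [this, le_div_iff₀ hDpos]
    linarith

/-- Theorem 30: upper bound for the largest eigenvalue via local
clustering. Assume `Γ` contains a triangle. With
`α_i = (∑_{j : (i,j) ∈ △} w_ij)/d_i`, `C₀ = min_{e=(i,j)} (α_i + α_j)/2`,
`W = (min_{i ∈ △} min_{k : (i,k) ∈ △} ∑_{l : (i,k,l) ∈ △} (d_i/d_l)(w_li w_lk / w_ik))^{1/2}`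
and `d̄ = max_{i ∈ △} d_i`, the largest eigenvalue satisfies
`λ_{N-1} ≤ 2 - (1/(2 d̄)) C₀ (W/(1+W))²`. -/
theorem largest_eigenvalue_le_of_clustering
    (w : V → V → ℝ)
    (hsym : ∀ i j, w i j = w j i) (hnn : ∀ i j, 0 ≤ w i j)
    (hdeg : ∀ i, 0 < deg w i) (hconn : Conn w) (hN : 2 ≤ Fintype.card V)
    (htri : ∃ i j k : V, i ≠ j ∧ i ≠ k ∧ j ≠ k ∧ 0 < w i j ∧ 0 < w j k ∧ 0 < w k i)
    (alpha : V → ℝ)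
    (halpha : ∀ i, alpha i =
      (∑ j, Set.indicator
        {j : V | 0 < w i j ∧ ∃ l, l ≠ i ∧ l ≠ j ∧ 0 < w i l ∧ 0 < w j l} (w i) j) /
        deg w i)
    (C0 : ℝ)
    (hC0 : C0 = sInf { r : ℝ | ∃ i j : V, 0 < w i j ∧ r = (alpha i + alpha j) / 2 })
    (W : ℝ)
    (hW : W = Real.sqrt (sInf { r : ℝ | ∃ i k : V,
        (0 < w i k ∧ ∃ l, l ≠ i ∧ l ≠ k ∧ 0 < w i l ∧ 0 < w k l) ∧
        r = ∑ l, Set.indicator {l : V | l ≠ i ∧ l ≠ k ∧ 0 < w i l ∧ 0 < w k l}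
          (fun l => (deg w i / deg w l) * (w l i * w l k / w i k)) l }))
    (dbar : ℝ)
    (hdbar : dbar = sSup { r : ℝ | ∃ i : V,
        (∃ k, 0 < w i k ∧ ∃ l, l ≠ i ∧ l ≠ k ∧ 0 < w i l ∧ 0 < w k l) ∧ r = deg w i })
    (lam : ℝ) (hlam : IsEigen w lam) (hmax : ∀ μ, IsEigen w μ → μ ≤ lam) :
    lam ≤ 2 - (1 / (2 * dbar)) * C0 * (W / (1 + W)) ^ 2 := by
  classical
  set tri : V → V → Prop := fun i k => 0 < w i k ∧ ∃ l, l ≠ i ∧ l ≠ k ∧ 0 < w i l ∧ 0 < w k l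
    with htridef
  have tri_symm : ∀ i k, tri i k → tri k i := by
    rintro i k ⟨h, l, h1, h2, h3, h4⟩
    exact ⟨by rwa [hsym], l, h2, h1, h4, h3⟩
  set T : V → V → ℝ := fun i k => if tri i k then w i k else 0 with hTdef
  have hT0 : ∀ i j, 0 ≤ T i j := by
    intro i j; simp only [hTdef]; split_ifs
    · exact hnn i j
    · exact le_rfl
  have hTw : ∀ i j, T i j ≤ w i j := by
    intro i j; simp only [hTdef]; split_ifs
    · exact le_rfl
    · exact hnn i j
  have hTs : ∀ i j, T i j = T j i := by
    intro i j
    simp only [hTdef]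
    by_cases h : tri i j
    · rw [if_pos h, if_pos (tri_symm _ _ h), hsym]
    · rw [if_neg h, if_neg (fun h' => h (tri_symm _ _ h'))]
  have halpha2 : ∀ i, ∑ j, T i j = alpha i * deg w i := by
    intro i
    rw [halpha i, div_mul_cancel₀ _ (hdeg i).ne']
    refine sum_congr rfl fun j _ => ?_
    simp only [hTdef, htridef, Set.indicator_apply, Set.mem_setOf_eq]
  have ha0 : ∀ i, 0 ≤ alpha i := by
    intro i
    have : 0 ≤ alpha i * deg w i := by
      rw [← halpha2 i]; exact sum_nonneg fun j _ => hT0 i j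
    exact nonneg_of_mul_nonneg_left this (hdeg i)
  have ha1 : ∀ i, alpha i ≤ 1 := by
    intro i
    have : alpha i * deg w i ≤ 1 * deg w i := by
      rw [← halpha2 i, one_mul]; exact sum_le_sum fun j _ => hTw i j
    exact le_of_mul_le_mul_right this (hdeg i)
  obtain ⟨p, q, r, hpq, hpr, hqr, wpq, wqr, wrp⟩ := htri
  have hpqtri : tri p q := ⟨wpq, r, hpr.symm, hqr.symm, by rwa [hsym], wqr⟩
  have hC0le : ∀ i j, 0 < w i j → C0 ≤ (alpha i + alpha j) / 2 := by
    intro i j h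
    rw [hC0]
    refine csInf_le ⟨0, ?_⟩ ⟨i, j, h, rfl⟩
    rintro x ⟨a, b, -, rfl⟩
    linarith [ha0 a, ha0 b]
  have hC00 : 0 ≤ C0 := by
    rw [hC0]
    refine Real.sInf_nonneg ?_
    rintro x ⟨a, b, -, rfl⟩
    linarith [ha0 a, ha0 b]
  have hC01 : C0 ≤ 1 := by
    have := hC0le p q wpq
    linarith [ha1 p, ha1 q]
  have hdle : ∀ i k, tri i k → deg w i ≤ dbar := by
    intro i k h
    rw [hdbar]
    refine le_csSup ⟨∑ j, deg w j, ?_⟩ ⟨i, ⟨k, h⟩, rfl⟩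
    rintro x ⟨a, -, rfl⟩
    exact single_le_sum (f := deg w) (fun j _ => (hdeg j).le) (mem_univ a)
  have hdb : 0 < dbar := lt_of_lt_of_le (hdeg p) (hdle p q hpqtri)
  have hterm : ∀ i k l, 0 ≤ Set.indicator {l : V | l ≠ i ∧ l ≠ k ∧ 0 < w i l ∧ 0 < w k l}
      (fun l => (deg w i / deg w l) * (w l i * w l k / w i k)) l := by
    intro i k l
    refine Set.indicator_nonneg (fun l _ => ?_) l
    exact mul_nonneg (div_nonneg (hdeg i).le (hdeg l).le)
      (div_nonneg (mul_nonneg (hnn _ _) (hnn _ _)) (hnn _ _))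
  set s := sInf { r : ℝ | ∃ i k : V,
        (0 < w i k ∧ ∃ l, l ≠ i ∧ l ≠ k ∧ 0 < w i l ∧ 0 < w k l) ∧
        r = ∑ l, Set.indicator {l : V | l ≠ i ∧ l ≠ k ∧ 0 < w i l ∧ 0 < w k l}
          (fun l => (deg w i / deg w l) * (w l i * w l k / w i k)) l } with hs
  have hs0 : 0 ≤ s := by
    refine Real.sInf_nonneg ?_
    rintro x ⟨a, b, -, rfl⟩
    exact sum_nonneg fun l _ => hterm a b l
  have hsle : ∀ i k, tri i k → s ≤ ∑ l, Set.indicator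
      {l : V | l ≠ i ∧ l ≠ k ∧ 0 < w i l ∧ 0 < w k l}
          (fun l => (deg w i / deg w l) * (w l i * w l k / w i k)) l := by
    intro i k h
    refine csInf_le ⟨0, ?_⟩ ⟨i, k, h, rfl⟩
    rintro x ⟨a, b, -, rfl⟩
    exact sum_nonneg fun l _ => hterm a b l
  have hgen : ∀ i k, tri i k → s / dbar * w i k ≤
      ∑ l, Set.indicator {l : V | l ≠ i ∧ l ≠ k ∧ 0 < w i l ∧ 0 < w k l}
        (fun l => w l i * w l k / deg w l) l := by
    intro i k h
    have hw := h.1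
    have h1 := mul_le_mul_of_nonneg_right (hsle i k h) hw.le
    have h2 : (∑ l, Set.indicator {l : V | l ≠ i ∧ l ≠ k ∧ 0 < w i l ∧ 0 < w k l}
          (fun l => (deg w i / deg w l) * (w l i * w l k / w i k)) l) * w i k =
        deg w i * ∑ l, Set.indicator {l : V | l ≠ i ∧ l ≠ k ∧ 0 < w i l ∧ 0 < w k l}
        (fun l => w l i * w l k / deg w l) l := by
      rw [sum_mul, mul_sum]
      refine sum_congr rfl fun l _ => ?_
      simp only [Set.indicator_apply]
      split_ifs
      · have := (hdeg l).ne'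
        have := hw.ne'
        field_simp
      · simp
    rw [h2] at h1
    have h3 : 0 ≤ ∑ l, Set.indicator {l : V | l ≠ i ∧ l ≠ k ∧ 0 < w i l ∧ 0 < w k l}
        (fun l => w l i * w l k / deg w l) l := sum_nonneg fun l _ =>
      Set.indicator_nonneg (fun l _ => div_nonneg (mul_nonneg (hnn _ _) (hnn _ _)) (hdeg l).le) l
    have h4 := mul_le_mul_of_nonneg_right (hdle i k h) h3
    rw [div_mul_eq_mul_div, div_le_iff₀ hdb]
    linarith
  have ho0 : 0 ≤ s / dbar := div_nonneg hs0 hdb.le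
  -- o ≤ 1
  set T' : V → V → ℝ := fun i k => if k ≠ i then T i k else 0 with hT'def
  have hT'0 : ∀ i k, 0 ≤ T' i k := by
    intro i k; simp only [hT'def]; split_ifs
    · exact hT0 i k
    · exact le_rfl
  have hT'b : ∀ k, s / dbar * T' p k ≤ ∑ l, T' p l * w l k / deg w l := by
    intro k
    have hRn : 0 ≤ ∑ l, T' p l * w l k / deg w l := sum_nonneg fun l _ =>
      div_nonneg (mul_nonneg (hT'0 _ _) (hnn _ _)) (hdeg l).le
    by_cases hk : k ≠ p
    · by_cases ht : tri p k
      · have : T' p k = w p k := by simp only [hT'def, hTdef]; rw [if_pos hk, if_pos ht]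
        rw [this]
        refine (hgen p k ht).trans (sum_le_sum fun l _ => ?_)
        simp only [Set.indicator_apply, Set.mem_setOf_eq]
        split_ifs with hl
        · obtain ⟨l1, l2, l3, l4⟩ := hl
          have : T' p l = w p l := by
            simp only [hT'def, hTdef]
            rw [if_pos l1, if_pos ⟨l3, k, hk, l2.symm, ht.1, by rwa [hsym]⟩]
          rw [this, hsym l p]
        · exact div_nonneg (mul_nonneg (hT'0 _ _) (hnn _ _)) (hdeg l).le
      · have : T' p k = 0 := by simp only [hT'def, hTdef]; rw [if_neg ht]; simp
        rw [this, mul_zero]; exact hRn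
    · have : T' p k = 0 := by simp only [hT'def]; rw [if_neg hk]
      rw [this, mul_zero]; exact hRn
  have ho1 : s / dbar ≤ 1 := by
    have hpos : 0 < ∑ k, T' p k := by
      refine sum_pos' (fun k _ => hT'0 p k) ⟨q, mem_univ _, ?_⟩
      simp only [hT'def, hTdef]
      rw [if_pos hpq.symm, if_pos hpqtri]; exact wpq
    have h1 : s / dbar * ∑ k, T' p k ≤ ∑ k, ∑ l, T' p l * w l k / deg w l := by
      rw [mul_sum]; exact sum_le_sum fun k _ => hT'b k
    have h2 : ∑ k, ∑ l, T' p l * w l k / deg w l = ∑ k, T' p k := by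
      rw [sum_comm]
      refine sum_congr rfl fun l _ => ?_
      rw [← sum_div, ← mul_sum]
      change T' p l * deg w l / deg w l = _
      rw [mul_div_cancel_right₀ _ (hdeg l).ne']
    rw [h2] at h1
    by_contra h
    push Not at h
    nlinarith
  have hT : ∀ i k, s / dbar * T i k ≤ ∑ l, w l i * w l k / deg w l := by
    intro i k
    have hnn' : ∀ l, 0 ≤ w l i * w l k / deg w l := fun l =>
      div_nonneg (mul_nonneg (hnn _ _) (hnn _ _)) (hdeg l).le
    by_cases ht : tri i k
    · have : T i k = w i k := by simp only [hTdef]; rw [if_pos ht]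
      rw [this]
      refine (hgen i k ht).trans (sum_le_sum fun l _ => ?_)
      exact Set.indicator_le_self' (fun l _ => hnn' l) l
    · have : T i k = 0 := by simp only [hTdef]; rw [if_neg ht]
      rw [this, mul_zero]
      exact sum_nonneg fun l _ => hnn' l
  obtain ⟨u, hu, hlap⟩ := hlam
  have hev : ∀ i, ∑ j, w i j * u j = (1 - lam) * (deg w i * u i) := by
    intro i
    have h := hlap i
    unfold lap at h
    have hne := (hdeg i).ne'
    field_simp at h
    linarith
  have main := core_bound w T (deg w) alpha u C0 (s / dbar) lam hsym hnn (fun _ => rfl) hdeg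
    hTs hT0 hTw halpha2 hC00 hC01 ho0 ho1 hT hC0le hu hev
  have hW0 : 0 ≤ W := by rw [hW]; exact Real.sqrt_nonneg _
  have hWs : W ^ 2 = s := by rw [hW]; exact Real.sq_sqrt hs0
  have hf : (W / (1 + W)) ^ 2 ≤ s := by
    rw [← hWs]
    have : W / (1 + W) ≤ W := div_le_self hW0 (by linarith)
    exact pow_le_pow_left₀ (div_nonneg hW0 (by linarith)) this 2
  have hfin : (1 / (2 * dbar)) * C0 * (W / (1 + W)) ^ 2 ≤ (1 / (2 * dbar)) * C0 * s :=
    mul_le_mul_of_nonneg_left hf (mul_nonneg (by positivity) hC00)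
  have heq : (1 / (2 * dbar)) * C0 * s = C0 * (s / dbar) / 2 := by
    field_simp
  linarith


end BJ
end
end
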